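/- (Score decomposition for arc-hybrid, the bookkeeping underlying the score-annotated deduction rules.) Let t be a complete arc-hybrid transition sequence for a sentence of length n ≥ 1 and let (g_sh, g_rr, g_rl) be any arc-hybrid parameterization. For each index i ∈ {0,…,n}, let k_i be the stack-top feature (⊥ if the stack is empty) of the configuration in which i is shifted; for each i ∈ {1,…,n}, let p_i be the buffer-front feature (n+1 if the buffer is empty) of the configuration in which i is popped. Then G(t) = g_sh(⊥, 0) + Σ_{i popped by rl} ( g_sh(k_i, i) + g_rl(i, p_i) ) + Σ_{i popped by rr} ( g_sh(k_i, i) + g_rr(i, p_i) ), and moreover A(t) = { (p_i, i) : i popped by rl } ∪ { (k_i, i) : i popped by rr }. -/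

import Mathlib

/-- A parser configuration: a stack of indices (head of the list = top of stack),
a buffer of indices (head of the list = front of buffer), and a set of arcs
`(h, m)` meaning `h` is the head of modifier `m`. -/
structure Config where
  stack : List ℕ
  buffer : List ℕ
  arcs : Finset (ℕ × ℕ)

/-- Initial configuration for a sentence of length `n`:
empty stack, buffer `[0, 1, …, n]` (ROOT is index 0), empty arc set. -/
def initConfig (n : ℕ) : Config := ⟨[], List.range (n + 1), ∅⟩

/-- Stack-top feature of a configuration: `none` plays the role of the dummy index ⊥
used when the stack is empty. -/
def stackFeat (c : Config) : Option ℕ := c.stack.head?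

/-- Buffer-front feature of a configuration: the end-marker index `n + 1`
when the buffer is empty. -/
def bufFeat (n : ℕ) (c : Config) : ℕ := c.buffer.headD (n + 1)

/-- Arc-eager transition labels. -/
inductive ETrans
  | sh | rl | ra | re
deriving DecidableEq

/-- Single arc-eager transitions between configurations. -/
inductive EStep : Config → ETrans → Config → Prop
  | sh (σ b β A) : EStep ⟨σ, b :: β, A⟩ .sh ⟨b :: σ, β, A⟩
  | rl (s σ b β A) (h : ∀ x, (x, s) ∉ A) :
      EStep ⟨s :: σ, b :: β, A⟩ .rl ⟨σ, b :: β, insert (b, s) A⟩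
  | ra (s σ b β A) :
      EStep ⟨s :: σ, b :: β, A⟩ .ra ⟨b :: s :: σ, β, insert (s, b) A⟩
  | re (s σ β A) (h : ∃ x, (x, s) ∈ A) :
      EStep ⟨s :: σ, β, A⟩ .re ⟨σ, β, A⟩

/-- `ETrace c t c'` holds when `t` is a list of (configuration, transition) pairs,
each transition taken in the recorded configuration, leading from `c` to `c'`. -/
inductive ETrace : Config → List (Config × ETrans) → Config → Prop
  | nil (c) : ETrace c [] c
  | cons {c c' cf : Config} {τ : ETrans} {rest} :
      EStep c τ c' → ETrace c' rest cf → ETrace c ((c, τ) :: rest) cf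

/-- Score of an arc-eager transition sequence under parameterization
`(fsh, fra, frl, fre)`: the sum, over the transitions, of the corresponding
scoring function evaluated at the feature pair of the configuration in which
the transition is taken. -/
def escore (n : ℕ) (fsh fra frl fre : Option ℕ → ℕ → ℝ)
    (t : List (Config × ETrans)) : ℝ :=
  (t.map fun e =>
    (match e.2 with
      | ETrans.sh => fsh
      | ETrans.ra => fra
      | ETrans.rl => frl
      | ETrans.re => fre) (stackFeat e.1) (bufFeat n e.1)).sum

/-- Arc-hybrid transition labels. -/
inductive HTrans
  | sh | rr | rl
deriving DecidableEq

/-- Single arc-hybrid transitions between configurations. -/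
inductive HStep : Config → HTrans → Config → Prop
  | sh (σ b β A) : HStep ⟨σ, b :: β, A⟩ .sh ⟨b :: σ, β, A⟩
  | rr (s0 s1 σ β A) :
      HStep ⟨s0 :: s1 :: σ, β, A⟩ .rr ⟨s1 :: σ, β, insert (s1, s0) A⟩
  | rl (s σ b β A) :
      HStep ⟨s :: σ, b :: β, A⟩ .rl ⟨σ, b :: β, insert (b, s) A⟩

/-- `HTrace c t c'` holds when `t` is a list of (configuration, transition) pairs,
each transition taken in the recorded configuration, leading from `c` to `c'`. -/
inductive HTrace : Config → List (Config × HTrans) → Config → Prop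
  | nil (c) : HTrace c [] c
  | cons {c c' cf : Config} {τ : HTrans} {rest} :
      HStep c τ c' → HTrace c' rest cf → HTrace c ((c, τ) :: rest) cf

/-- Score of an arc-hybrid transition sequence under parameterization
`(gsh, grr, grl)`. -/
def hscore (n : ℕ) (gsh grr grl : Option ℕ → ℕ → ℝ)
    (t : List (Config × HTrans)) : ℝ :=
  (t.map fun e =>
    (match e.2 with
      | HTrans.sh => gsh
      | HTrans.rr => grr
      | HTrans.rl => grl) (stackFeat e.1) (bufFeat n e.1)).sum

/-- Index `i` is popped by an rl transition somewhere in `t`. -/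
def poppedByRl (t : List (Config × HTrans)) (i : ℕ) : Bool :=
  t.any fun e => e.2 == HTrans.rl && e.1.stack.head? == some i

/-- Index `i` is popped by an rr transition somewhere in `t`. -/
def poppedByRr (t : List (Config × HTrans)) (i : ℕ) : Bool :=
  t.any fun e => e.2 == HTrans.rr && e.1.stack.head? == some i

/-!
Along any sequence, popping moves an index out of the stack and shifting moves it from the buffer to
the stack. Hence the indices of stack and buffer together are always a permutation of those still to
be popped and those left over at the end; for a complete sequence everything but the root is popped
exactly once, so the shift scores can be regrouped by the way in which each index is later popped.
For the arcs, the invariant is that `k` sends every stack element to the element immediately below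
it, so an `rr` transition gives `i` the head `k i`; for the final stack `[0]` the invariant says
that `k 0` is `⊥`.
-/

section

open HTrans List

/-- The indices shifted in the course of `t`, in order of shifting. -/
def shifted (t : List (Config × HTrans)) : List ℕ :=
  t.filterMap fun e => if e.2 = sh then e.1.buffer.head? else none

/-- The indices popped by the reduce transitions labelled `τ` in the course of `t`, in order of
popping; meaningful for `τ = rr` and `τ = rl` only, since `sh` pops nothing. -/
def popped (τ : HTrans) (t : List (Config × HTrans)) : List ℕ :=
  t.filterMap fun e => if e.2 = τ then e.1.stack.head? else none

/-- `k i` is the stack-top feature `k_i` of each index `i` shifted in `t`; no condition on the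
values of `k` elsewhere. -/
def IsShiftFeat (k : ℕ → Option ℕ) (t : List (Config × HTrans)) : Prop :=
  ∀ e ∈ t, e.2 = sh → ∀ i, e.1.buffer.head? = some i → stackFeat e.1 = k i

/-- `p i` is the buffer-front feature `p_i` of each index `i` popped in `t`, with end-marker
`n + 1`; no condition on the values of `p` elsewhere. -/
def IsPopFeat (n : ℕ) (p : ℕ → ℕ) (t : List (Config × HTrans)) : Prop :=
  ∀ e ∈ t, (e.2 = rr ∨ e.2 = rl) → ∀ i, e.1.stack.head? = some i → bufFeat n e.1 = p i

/-- The stack `σ` is linked by `k` if `k` sends each of its elements to the element immediately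
below it, and the bottom one to `none`. This invariant identifies the head of an `rr` arc. -/
def Linked (k : ℕ → Option ℕ) : List ℕ → Prop
  | [] => True
  | s :: σ => k s = σ.head? ∧ Linked k σ

theorem mem_popped_rl {t : List (Config × HTrans)} {i : ℕ} :
    i ∈ popped rl t ↔ poppedByRl t i = true := by
  simp [popped, poppedByRl]

theorem mem_popped_rr {t : List (Config × HTrans)} {i : ℕ} :
    i ∈ popped rr t ↔ poppedByRr t i = true := by
  simp [popped, poppedByRr]

theorem HStep.linked {k : ℕ → Option ℕ} {c c' : Config} {τ : HTrans} (h : HStep c τ c')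
    (hk : IsShiftFeat k [(c, τ)]) (hc : Linked k c.stack) : Linked k c'.stack := by
  cases h with
  | sh σ b β A => exact ⟨(hk _ mem_cons_self rfl b rfl).symm, hc⟩
  | rr | rl => exact hc.2

namespace HTrace

variable {n : ℕ} {c c' : Config} {t : List (Config × HTrans)} {k : ℕ → Option ℕ} {p : ℕ → ℕ}

theorem linked (ht : HTrace c t c') (hk : IsShiftFeat k t) (hc : Linked k c.stack) :
    Linked k c'.stack := by
  induction ht with
  | nil => exact hc
  | cons hstep _ ih =>
    obtain ⟨hk₀, hk⟩ := forall_mem_cons.1 hk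
    exact ih hk (hstep.linked (forall_mem_singleton.2 hk₀) hc)

theorem shifted_append_buffer (ht : HTrace c t c') : shifted t ++ c'.buffer = c.buffer := by
  induction ht with
  | nil => rfl
  | cons hstep _ ih => cases hstep <;> simpa [shifted] using ih

theorem popped_append_perm (ht : HTrace c t c') :
    popped rl t ++ popped rr t ++ (c'.stack ++ c'.buffer) ~ c.stack ++ c.buffer := by
  induction ht with
  | nil => exact Perm.refl _
  | cons hstep _ ih =>
    cases hstep with
    | sh σ b β A => exact ih.trans perm_middle.symm
    | rr s₀ s₁ σ β A => exact (perm_middle.append_right _).trans (ih.cons s₀)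
    | rl s σ b β A => exact ih.cons s

theorem hscore_eq (ht : HTrace c t c') (hk : IsShiftFeat k t) (hp : IsPopFeat n p t)
    (gsh grr grl : Option ℕ → ℕ → ℝ) :
    hscore n gsh grr grl t =
      ((shifted t).map fun i => gsh (k i) i).sum
      + ((popped rl t).map fun i => grl (some i) (p i)).sum
      + ((popped rr t).map fun i => grr (some i) (p i)).sum := by
  induction ht with
  | nil => simp [hscore, shifted, popped]
  | cons hstep _ ih =>
    obtain ⟨hk₀, hk⟩ := forall_mem_cons.1 hk
    obtain ⟨hp₀, hp⟩ := forall_mem_cons.1 hp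
    specialize ih hk hp
    cases hstep with
    | sh σ b β A =>
      have hkb : stackFeat ⟨σ, b :: β, A⟩ = k b := hk₀ rfl b rfl
      simp only [hscore, shifted, popped, bufFeat, headD_cons, hkb, map_cons, sum_cons, head?_cons,
        filterMap_cons_some, filterMap_cons_none, Option.some.injEq, reduceCtorEq, ↓reduceIte]
        at ih ⊢
      rw [ih]
      ring
    | rr s₀ s₁ σ β A =>
      have hps : bufFeat n ⟨s₀ :: s₁ :: σ, β, A⟩ = p s₀ := hp₀ (.inl rfl) s₀ rfl
      simp only [hscore, shifted, popped, stackFeat, hps, map_cons, sum_cons, head?_cons,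
        filterMap_cons_some, filterMap_cons_none, Option.some.injEq, reduceCtorEq, ↓reduceIte]
        at ih ⊢
      rw [ih]
      ring
    | rl s σ b β A =>
      have hps : bufFeat n ⟨s :: σ, b :: β, A⟩ = p s := hp₀ (.inr rfl) s rfl
      simp only [hscore, shifted, popped, stackFeat, hps, map_cons, sum_cons, head?_cons,
        filterMap_cons_some, filterMap_cons_none, Option.some.injEq, reduceCtorEq, ↓reduceIte]
        at ih ⊢
      rw [ih]
      ring

theorem arcs_eq (ht : HTrace c t c') (hk : IsShiftFeat k t) (hp : IsPopFeat n p t)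
    (hc : Linked k c.stack) :
    c'.arcs = c.arcs ∪ ((popped rl t).toFinset.image (fun i => (p i, i))
      ∪ (popped rr t).toFinset.image (fun i => ((k i).getD 0, i))) := by
  induction ht with
  | nil => simp [popped]
  | cons hstep _ ih =>
    obtain ⟨hk₀, hk⟩ := forall_mem_cons.1 hk
    obtain ⟨hp₀, hp⟩ := forall_mem_cons.1 hp
    rw [ih hk hp (hstep.linked (forall_mem_singleton.2 hk₀) hc)]
    cases hstep with
    | sh => rfl
    | rr s₀ s₁ σ β A =>
      have hks : k s₀ = some s₁ := hc.1
      simp [popped, hks]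
    | rl s σ b β A =>
      have hps : b = p s := hp₀ (.inr rfl) s rfl
      simp [popped, ← hps]

section Complete

variable {A : Finset (ℕ × ℕ)}

theorem shifted_eq_range (ht : HTrace (initConfig n) t ⟨[0], [], A⟩) :
    shifted t = List.range (n + 1) := by
  simpa [initConfig] using ht.shifted_append_buffer

theorem popped_perm_range' (ht : HTrace (initConfig n) t ⟨[0], [], A⟩) :
    popped rl t ++ popped rr t ~ List.range' 1 n := by
  have h : popped rl t ++ popped rr t ++ [0] ~ 0 :: List.range' 1 n := by
    simpa [initConfig, range_eq_range', range'_succ] using ht.popped_append_perm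
  exact ((perm_append_singleton _ _).symm.trans h).cons_inv

theorem nodup_popped (ht : HTrace (initConfig n) t ⟨[0], [], A⟩) :
    (popped rl t).Nodup ∧ (popped rr t).Nodup := by
  have h := ht.popped_perm_range'.nodup_iff.2 nodup_range'
  exact ⟨h.of_append_left, h.of_append_right⟩

theorem mem_Icc_of_mem_popped (ht : HTrace (initConfig n) t ⟨[0], [], A⟩) {i : ℕ}
    (hi : i ∈ popped rl t ++ popped rr t) : i ∈ Finset.Icc 1 n := by
  have h := mem_range'_1.1 (ht.popped_perm_range'.mem_iff.1 hi)
  rw [Finset.mem_Icc]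
  lia

theorem filter_poppedByRl (ht : HTrace (initConfig n) t ⟨[0], [], A⟩) :
    (Finset.Icc 1 n).filter (fun i => poppedByRl t i = true) = (popped rl t).toFinset := by
  ext i
  rw [Finset.mem_filter, mem_toFinset, ← mem_popped_rl]
  exact and_iff_right_of_imp fun hi => ht.mem_Icc_of_mem_popped (mem_append_left _ hi)

theorem filter_poppedByRr (ht : HTrace (initConfig n) t ⟨[0], [], A⟩) :
    (Finset.Icc 1 n).filter (fun i => poppedByRr t i = true) = (popped rr t).toFinset := by
  ext i
  rw [Finset.mem_filter, mem_toFinset, ← mem_popped_rr]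
  exact and_iff_right_of_imp fun hi => ht.mem_Icc_of_mem_popped (mem_append_right _ hi)

theorem sum_map_shifted {M : Type*} [AddCommMonoid M]
    (ht : HTrace (initConfig n) t ⟨[0], [], A⟩) (f : ℕ → M) :
    ((shifted t).map f).sum
      = f 0 + (((popped rl t).map f).sum + ((popped rr t).map f).sum) := by
  rw [ht.shifted_eq_range, range_eq_range', range'_succ, map_cons, sum_cons,
    ← (ht.popped_perm_range'.map f).sum_eq, map_append, sum_append]

end Complete

end HTrace

end

/-- **Score decomposition for arc-hybrid** (the bookkeeping underlying the
score-annotated deduction rules). Here `k i` is the stack-top feature of the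
configuration in which `i` is shifted and `p i` is the buffer-front feature of
the configuration in which `i` is popped (encoded by the hypotheses `hk`, `hp`,
which pin these values down since each index is shifted/popped exactly once). -/
theorem arc_hybrid_score_decomposition
    (n : ℕ) (hn : 1 ≤ n)
    (gsh grr grl : Option ℕ → ℕ → ℝ)
    (t : List (Config × HTrans)) (A : Finset (ℕ × ℕ))
    (ht : HTrace (initConfig n) t ⟨[0], [], A⟩)
    (k : ℕ → Option ℕ) (p : ℕ → ℕ)
    (hk : ∀ e ∈ t, e.2 = HTrans.sh →
        ∀ i, e.1.buffer.head? = some i → stackFeat e.1 = k i)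
    (hp : ∀ e ∈ t, (e.2 = HTrans.rr ∨ e.2 = HTrans.rl) →
        ∀ i, e.1.stack.head? = some i → bufFeat n e.1 = p i) :
    hscore n gsh grr grl t =
        gsh none 0
        + ∑ i ∈ (Finset.Icc 1 n).filter (fun i => poppedByRl t i = true),
            (gsh (k i) i + grl (some i) (p i))
        + ∑ i ∈ (Finset.Icc 1 n).filter (fun i => poppedByRr t i = true),
            (gsh (k i) i + grr (some i) (p i))
    ∧ A = ((Finset.Icc 1 n).filter (fun i => poppedByRl t i = true)).image
              (fun i => (p i, i))
          ∪ ((Finset.Icc 1 n).filter (fun i => poppedByRr t i = true)).image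
              (fun i => ((k i).getD 0, i)) := by
  have hk₀ : k 0 = none := (ht.linked hk trivial).1
  obtain ⟨hrl, hrr⟩ := ht.nodup_popped
  rw [ht.filter_poppedByRl, ht.filter_poppedByRr]
  constructor
  · rw [ht.hscore_eq hk hp, ht.sum_map_shifted, hk₀, List.sum_toFinset _ hrl,
      List.sum_toFinset _ hrr, List.sum_map_add, List.sum_map_add]
    ring
  · simpa [initConfig] using ht.arcs_eq hk hp trivial
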